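/- Let d ≥ 1, let ν be a compactly supported Borel probability measure on ℝ^d, let g, r ∈ ℝ with r > 0, and let x* ~ ν and z ~ N(0, I_d) be independent random vectors on a probability space; set x = g·x* + r·z. Define m(y) = (∫ x' exp(−‖y − g·x'‖²/(2r²)) dν(x')) / (∫ exp(−‖y − g·x'‖²/(2r²)) dν(x')). Then m(x) is a version of the conditional expectation of x* given the σ-algebra generated by x: E[x* | σ(x)] = m(x) almost surely. -/

import Mathlib

open MeasureTheory Real
open scoped RealInnerProductSpace

/-- The standard Gaussian measure `N(0, I_d)` on `ℝ^d`. -/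
noncomputable def stdGaussian (d : ℕ) : Measure (EuclideanSpace ℝ (Fin d)) :=
  volume.withDensity fun x =>
    ENNReal.ofReal ((2 * π) ^ (-(d : ℝ) / 2) * exp (-‖x‖ ^ 2 / 2))

/-!
Bayes' formula: if `(X, Y)` has density `w` with respect to a product measure `ν.prod lam`, then,
writing `D y = ∫ w(x, y) dν(x)` for the density of the law of `Y`, Fubini gives
`E[f(X, Y); Y ∈ B] = ∫_B ∫ w(x, y) f(x, y) dν(x) dlam(y) = ∫_B D(y) m(y) dlam(y) = E[m(Y); Y ∈ B]`,
where `m` is the `w`-weighted average of `f` over `ν`. For `Y = a(X) + r Z` with independent noise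
`Z` of density `ρ`, an affine change of variables in `z` produces such a joint density,
`w(x, y) = ρ((y - a(x)) / r)`, the Jacobian being absorbed into `lam`.
-/

section Bayes

variable {α β F Ω : Type*} [MeasurableSpace α] [NormedAddCommGroup F] [NormedSpace ℝ F]

/-- The posterior mean of `f` given an observation `y`, for the prior `ν` and the (not necessarily
normalized) likelihood `w`: the average of `f (·, y)` over `ν` with weights `w (·, y)`. It is `0`
where the total weight vanishes. -/
noncomputable def posteriorMean (ν : Measure α) (w : α × β → ℝ) (f : α × β → F) (y : β) : F :=
  (∫ x, w (x, y) ∂ν)⁻¹ • ∫ x, w (x, y) • f (x, y) ∂ν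

theorem integral_smul_posteriorMean {ν : Measure α} {w : α × β → ℝ} (f : α × β → F)
    (hw_nonneg : 0 ≤ w) {y : β} (hw_int : Integrable (fun x => w (x, y)) ν) :
    (∫ x, w (x, y) ∂ν) • posteriorMean ν w f y = ∫ x, w (x, y) • f (x, y) ∂ν := by
  by_cases hD : ∫ x, w (x, y) ∂ν = 0
  · have hw_zero : (fun x => w (x, y)) =ᵐ[ν] 0 :=
      (integral_eq_zero_iff_of_nonneg (fun x => hw_nonneg (x, y)) hw_int).1 hD
    rw [hD, zero_smul]
    refine (integral_eq_zero_of_ae ?_).symm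
    filter_upwards [hw_zero] with x hx
    simp only [hx, Pi.zero_apply, zero_smul]
  · rw [posteriorMean, smul_inv_smul₀ hD]

variable [MeasurableSpace β]

theorem stronglyMeasurable_posteriorMean {ν : Measure α} [SFinite ν] {w : α × β → ℝ}
    {f : α × β → F} (hw : Measurable w) (hf : StronglyMeasurable f) :
    StronglyMeasurable (posteriorMean ν w f) :=
  hw.stronglyMeasurable.integral_prod_left'.measurable.inv.stronglyMeasurable.smul
    (hw.stronglyMeasurable.smul hf).integral_prod_left'

variable [MeasurableSpace Ω] {P : Measure Ω} {ν : Measure α} {lam : Measure β} {w : α × β → ℝ}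
  {f : α × β → F} {X : Ω → α} {Y : Ω → β}

theorem integrable_comp_prodMk_iff_of_map_eq_withDensity (hX : AEMeasurable X P)
    (hY : AEMeasurable Y P) (hw : Measurable w) (hw_nonneg : 0 ≤ w)
    (hXY : P.map (fun ω => (X ω, Y ω)) =
      (ν.prod lam).withDensity fun p => ENNReal.ofReal (w p))
    (hf : StronglyMeasurable f) :
    Integrable (fun ω => f (X ω, Y ω)) P ↔ Integrable (fun p => w p • f p) (ν.prod lam) := by
  have h_map := integrable_map_measure hf.aestronglyMeasurable (hX.prodMk hY)
  rw [hXY, integrable_withDensity_iff_integrable_smul' hw.ennreal_ofReal (by simp)] at h_map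
  simpa only [ENNReal.toReal_ofReal (hw_nonneg _), Function.comp_def] using h_map.symm

theorem setIntegral_preimage_of_map_eq_withDensity [SFinite ν] [SFinite lam]
    (hX : AEMeasurable X P) (hY : AEMeasurable Y P) (hw : Measurable w) (hw_nonneg : 0 ≤ w)
    (hXY : P.map (fun ω => (X ω, Y ω)) =
      (ν.prod lam).withDensity fun p => ENNReal.ofReal (w p))
    (hf : StronglyMeasurable f) (hf_int : Integrable (fun ω => f (X ω, Y ω)) P)
    {B : Set β} (hB : MeasurableSet B) :
    ∫ ω in Y ⁻¹' B, f (X ω, Y ω) ∂P = ∫ y in B, ∫ x, w (x, y) • f (x, y) ∂ν ∂lam := by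
  have hB' : MeasurableSet (Set.univ ×ˢ B : Set (α × β)) := MeasurableSet.univ.prod hB
  have hwf_int := (integrable_comp_prodMk_iff_of_map_eq_withDensity
    hX hY hw hw_nonneg hXY hf).1 hf_int
  have hwf_restrict :
      Integrable (fun p => w p • f p) (ν.prod (lam.restrict B)) := by
    simpa only [← Measure.prod_restrict, Measure.restrict_univ] using
      hwf_int.restrict (s := Set.univ ×ˢ B)
  calc ∫ ω in Y ⁻¹' B, f (X ω, Y ω) ∂P
      = ∫ p in Set.univ ×ˢ B, f p ∂(P.map fun ω => (X ω, Y ω)) := by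
        rw [setIntegral_map hB' hf.aestronglyMeasurable (hX.prodMk hY), Set.mk_preimage_prod,
          Set.preimage_univ, Set.univ_inter]
    _ = ∫ p in Set.univ ×ˢ B, w p • f p ∂(ν.prod lam) := by
        rw [hXY, setIntegral_withDensity_eq_setIntegral_toReal_smul hw.ennreal_ofReal
          (by simp) _ hB']
        simp only [ENNReal.toReal_ofReal (hw_nonneg _)]
    _ = ∫ y in B, ∫ x, w (x, y) • f (x, y) ∂ν ∂lam := by
        rw [← Measure.prod_restrict, Measure.restrict_univ, integral_prod_symm _ hwf_restrict]

theorem ae_integrable_and_integral_smul_posteriorMean [IsFiniteMeasure P] [SFinite ν] [SFinite lam]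
    (hX : AEMeasurable X P) (hY : AEMeasurable Y P) (hw : Measurable w) (hw_nonneg : 0 ≤ w)
    (hXY : P.map (fun ω => (X ω, Y ω)) =
      (ν.prod lam).withDensity fun p => ENNReal.ofReal (w p)) (f : α × β → F) :
    ∀ᵐ y ∂lam, Integrable (fun x => w (x, y)) ν ∧
      (∫ x, w (x, y) ∂ν) • posteriorMean ν w f y = ∫ x, w (x, y) • f (x, y) ∂ν := by
  have hw_int : Integrable w (ν.prod lam) := by
    simpa only [smul_eq_mul, mul_one] using (integrable_comp_prodMk_iff_of_map_eq_withDensity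
      hX hY hw hw_nonneg hXY (stronglyMeasurable_const (b := (1 : ℝ)))).1 (integrable_const 1)
  filter_upwards [hw_int.prod_left_ae] with y hy
  exact ⟨hy, integral_smul_posteriorMean f hw_nonneg hy⟩

theorem integrable_posteriorMean_comp [IsFiniteMeasure P] [SFinite ν] [SFinite lam]
    (hX : AEMeasurable X P) (hY : AEMeasurable Y P) (hw : Measurable w) (hw_nonneg : 0 ≤ w)
    (hXY : P.map (fun ω => (X ω, Y ω)) =
      (ν.prod lam).withDensity fun p => ENNReal.ofReal (w p))
    (hf : StronglyMeasurable f) (hf_int : Integrable (fun ω => f (X ω, Y ω)) P) :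
    Integrable (fun ω => posteriorMean ν w f (Y ω)) P := by
  have hm : StronglyMeasurable fun p : α × β => posteriorMean ν w f p.2 :=
    (stronglyMeasurable_posteriorMean hw hf).comp_measurable measurable_snd
  have hwf_int := (integrable_comp_prodMk_iff_of_map_eq_withDensity
    hX hY hw hw_nonneg hXY hf).1 hf_int
  have hD := ae_integrable_and_integral_smul_posteriorMean hX hY hw hw_nonneg hXY f
  refine (integrable_comp_prodMk_iff_of_map_eq_withDensity hX hY hw hw_nonneg hXY hm).2
    ((integrable_prod_iff' (hw.stronglyMeasurable.smul hm).aestronglyMeasurable).2 ⟨?_, ?_⟩)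
  · filter_upwards [hD] with y hy using hy.1.smul_const (posteriorMean ν w f y)
  · refine hwf_int.integral_prod_right.norm.congr ?_
    filter_upwards [hD] with y hy
    calc ‖∫ x, w (x, y) • f (x, y) ∂ν‖
        = (∫ x, w (x, y) ∂ν) * ‖posteriorMean ν w f y‖ := by
          rw [← hy.2, norm_smul, Real.norm_of_nonneg (integral_nonneg fun x => hw_nonneg (x, y))]
      _ = ∫ x, ‖w (x, y) • posteriorMean ν w f y‖ ∂ν := by
          simp only [norm_smul, Real.norm_of_nonneg (hw_nonneg _), integral_mul_const]

theorem condExp_comp_prodMk_ae_eq_posteriorMean [CompleteSpace F] [IsFiniteMeasure P]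
    [SFinite ν] [SFinite lam]
    (hX : AEMeasurable X P) (hY : Measurable Y) (hw : Measurable w) (hw_nonneg : 0 ≤ w)
    (hXY : P.map (fun ω => (X ω, Y ω)) =
      (ν.prod lam).withDensity fun p => ENNReal.ofReal (w p))
    (hf : StronglyMeasurable f) (hf_int : Integrable (fun ω => f (X ω, Y ω)) P) :
    P[fun ω => f (X ω, Y ω) | MeasurableSpace.comap Y inferInstance]
      =ᵐ[P] fun ω => posteriorMean ν w f (Y ω) := by
  have hY' := hY.aemeasurable (μ := P)
  have hm := stronglyMeasurable_posteriorMean (ν := ν) hw hf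
  have hm_int := integrable_posteriorMean_comp hX hY' hw hw_nonneg hXY hf hf_int
  refine (ae_eq_condExp_of_forall_setIntegral_eq hY.comap_le hf_int
    (fun _ _ _ => hm_int.integrableOn) ?_
    (hm.comp_measurable (comap_measurable Y)).aestronglyMeasurable).symm
  rintro _ ⟨B, hB, rfl⟩ -
  rw [setIntegral_preimage_of_map_eq_withDensity hX hY' hw hw_nonneg hXY hf hf_int hB,
    setIntegral_preimage_of_map_eq_withDensity hX hY' hw hw_nonneg hXY
      (f := fun p => posteriorMean ν w f p.2) (hm.comp_measurable measurable_snd) hm_int hB]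
  refine integral_congr_ae (ae_restrict_of_ae ?_)
  filter_upwards [ae_integrable_and_integral_smul_posteriorMean hX hY' hw hw_nonneg hXY f] with y hy
  rw [integral_smul_const, hy.2]

end Bayes

section AdditiveNoise

open Module (finrank)

variable {E : Type*} [NormedAddCommGroup E] [NormedSpace ℝ E] [FiniteDimensional ℝ E]
  [MeasurableSpace E] [BorelSpace E] (μ : Measure E) [μ.IsAddHaarMeasure]

theorem map_add_smul_addHaar (a : E) {r : ℝ} (hr : r ≠ 0) :
    μ.map (fun z => a + r • z) = ENNReal.ofReal |(r ^ finrank ℝ E)⁻¹| • μ := by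
  calc μ.map (fun z => a + r • z)
      = (μ.map (r • ·)).map (a + ·) := (Measure.map_map (by fun_prop) (by fun_prop)).symm
    _ = ENNReal.ofReal |(r ^ finrank ℝ E)⁻¹| • μ := by
        rw [Measure.map_addHaar_smul μ hr, Measure.map_smul, map_add_left_eq_self]

variable {μ}

theorem lintegral_withDensity_comp_add_smul {ρ : E → ENNReal} (hρ : Measurable ρ)
    {h : E → ENNReal} (hh : Measurable h) (a : E) {r : ℝ} (hr : r ≠ 0) :
    ∫⁻ z, h (a + r • z) ∂μ.withDensity ρ =
      ∫⁻ y, ρ (r⁻¹ • (y - a)) * h y ∂(ENNReal.ofReal |(r ^ finrank ℝ E)⁻¹| • μ) := by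
  rw [lintegral_withDensity_eq_lintegral_mul _ hρ (by fun_prop), ← map_add_smul_addHaar μ a hr,
    lintegral_map (by fun_prop) (by fun_prop)]
  simp only [Pi.mul_apply, add_sub_cancel_left, inv_smul_smul₀ hr]

variable {α Ω : Type*} [MeasurableSpace α] [MeasurableSpace Ω] {P : Measure Ω}
  [IsFiniteMeasure P] {X : Ω → α} {Z : Ω → E} {a : α → E} {r : ℝ}

theorem map_prodMk_add_smul_eq_withDensity {ρ : E → ENNReal} (hρ : Measurable ρ)
    (hX : Measurable X) (hZ : Measurable Z) (hZ_law : P.map Z = μ.withDensity ρ)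
    (hXZ : ProbabilityTheory.IndepFun X Z P) (ha : Measurable a) (hr : r ≠ 0) :
    P.map (fun ω => (X ω, a (X ω) + r • Z ω)) =
      ((P.map X).prod (ENNReal.ofReal |(r ^ finrank ℝ E)⁻¹| • μ)).withDensity
        fun p => ρ (r⁻¹ • (p.2 - a p.1)) := by
  have h_joint : P.map (fun ω => (X ω, a (X ω) + r • Z ω)) =
      ((P.map X).prod (P.map Z)).map fun p => (p.1, a p.1 + r • p.2) := by
    rw [← hXZ.map_prod_eq_prod_map_map hX.aemeasurable hZ.aemeasurable,
      Measure.map_map (by fun_prop) (by fun_prop)]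
    rfl
  rw [h_joint]
  refine Measure.ext_of_lintegral _ fun h hh => ?_
  rw [lintegral_map hh (by fun_prop), lintegral_prod _ (by fun_prop),
    lintegral_withDensity_eq_lintegral_mul _ (by fun_prop) hh, lintegral_prod _ (by fun_prop)]
  refine lintegral_congr fun x => ?_
  rw [hZ_law]
  exact lintegral_withDensity_comp_add_smul hρ (h := fun y => h (x, y)) (by fun_prop) (a x) hr

theorem condExp_add_smul_ae_eq_posteriorMean {F : Type*} [NormedAddCommGroup F]
    [NormedSpace ℝ F] [CompleteSpace F] {ρ : E → ℝ} (hρ : Measurable ρ) (hρ_nonneg : 0 ≤ ρ)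
    (hX : Measurable X) (hZ : Measurable Z)
    (hZ_law : P.map Z = μ.withDensity fun z => ENNReal.ofReal (ρ z))
    (hXZ : ProbabilityTheory.IndepFun X Z P) (ha : Measurable a) (hr : r ≠ 0)
    {f : α × E → F} (hf : StronglyMeasurable f)
    (hf_int : Integrable (fun ω => f (X ω, a (X ω) + r • Z ω)) P) :
    P[fun ω => f (X ω, a (X ω) + r • Z ω) |
        MeasurableSpace.comap (fun ω => a (X ω) + r • Z ω) inferInstance]
      =ᵐ[P] fun ω => posteriorMean (P.map X) (fun p => ρ (r⁻¹ • (p.2 - a p.1))) f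
        (a (X ω) + r • Z ω) := by
  have hw : Measurable fun p : α × E => ρ (r⁻¹ • (p.2 - a p.1)) := by fun_prop
  have hY : Measurable fun ω => a (X ω) + r • Z ω := by fun_prop
  have h_law := map_prodMk_add_smul_eq_withDensity hρ.ennreal_ofReal hX hZ hZ_law hXZ ha hr
  exact condExp_comp_prodMk_ae_eq_posteriorMean hX.aemeasurable hY hw (fun _ => hρ_nonneg _)
    h_law hf hf_int

end AdditiveNoise

theorem stdGaussian_eq_withDensity_exp (d : ℕ) :
    stdGaussian d = (ENNReal.ofReal ((2 * π) ^ (-(d : ℝ) / 2)) •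
      (volume : Measure (EuclideanSpace ℝ (Fin d)))).withDensity
        fun z => ENNReal.ofReal (exp (-‖z‖ ^ 2 / 2)) := by
  rw [withDensity_smul_measure, ← withDensity_smul _ (by fun_prop), stdGaussian]
  congr 1 with z
  rw [ENNReal.ofReal_mul (by positivity), Pi.smul_apply, smul_eq_mul]

theorem neg_norm_inv_smul_sq_div_two {E : Type*} [SeminormedAddCommGroup E] [NormedSpace ℝ E]
    (r : ℝ) (v : E) : -‖r⁻¹ • v‖ ^ 2 / 2 = -‖v‖ ^ 2 / (2 * r ^ 2) := by
  rw [norm_smul, norm_inv, mul_pow, inv_pow, Real.norm_eq_abs, sq_abs]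
  ring

theorem integrable_of_isBounded_of_map_compl_eq_zero {E Ω : Type*} [NormedAddCommGroup E]
    [MeasurableSpace E] [BorelSpace E] [MeasurableSpace Ω] {P : Measure Ω} [IsFiniteMeasure P]
    {X : Ω → E}
    (hX : AEStronglyMeasurable X P) {K : Set E} (hK : Bornology.IsBounded K)
    (hXK : P.map X Kᶜ = 0) : Integrable X P := by
  obtain ⟨R, hR⟩ := hK.exists_norm_le
  have hX_mem : ∀ᵐ ω ∂P, X ω ∈ K := ae_of_ae_map hX.aemeasurable (mem_ae_iff.2 hXK)
  exact Integrable.of_bound hX R (hX_mem.mono fun ω hω => hR _ hω)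

theorem stmt_13_general {d : ℕ} {α Ω F : Type*} [MeasurableSpace α] [MeasurableSpace Ω]
    [NormedAddCommGroup F] [NormedSpace ℝ F] [CompleteSpace F]
    (P : Measure Ω) [IsProbabilityMeasure P] {X : Ω → α} {Z : Ω → EuclideanSpace ℝ (Fin d)}
    (hX : Measurable X) (hZ : Measurable Z) (hZ_law : P.map Z = stdGaussian d)
    (hXZ : ProbabilityTheory.IndepFun X Z P)
    {a : α → EuclideanSpace ℝ (Fin d)} (ha : Measurable a) {r : ℝ} (hr : r ≠ 0)
    {f : α × EuclideanSpace ℝ (Fin d) → F} (hf : StronglyMeasurable f)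
    (hf_int : Integrable (fun ω => f (X ω, a (X ω) + r • Z ω)) P) :
    P[fun ω => f (X ω, a (X ω) + r • Z ω) |
        MeasurableSpace.comap (fun ω => a (X ω) + r • Z ω) inferInstance]
      =ᵐ[P] fun ω => posteriorMean (P.map X)
        (fun p => exp (-‖p.2 - a p.1‖ ^ 2 / (2 * r ^ 2))) f (a (X ω) + r • Z ω) := by
  have hC : 0 < (2 * π) ^ (-(d : ℝ) / 2) := by positivity
  have := Measure.IsAddHaarMeasure.smul (volume : Measure (EuclideanSpace ℝ (Fin d)))
    (ENNReal.ofReal_pos.2 hC).ne' ENNReal.ofReal_ne_top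
  simpa only [neg_norm_inv_smul_sq_div_two] using
    condExp_add_smul_ae_eq_posteriorMean (ρ := fun z => exp (-‖z‖ ^ 2 / 2)) (by fun_prop)
      (fun _ => (exp_pos _).le) hX hZ (hZ_law.trans (stdGaussian_eq_withDensity_exp d)) hXZ ha hr
      hf hf_int

/-- the explicit Gaussian-weighted ratio of integrals `m` is a version of the
posterior mean `E[x* | σ(x)]` for the linear interpolant `x = g • x* + r • z`. -/
theorem stmt_13 {d : ℕ} (hd : 1 ≤ d)
    {Ω : Type*} [MeasurableSpace Ω] (P : Measure Ω) [IsProbabilityMeasure P]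
    (ν : Measure (EuclideanSpace ℝ (Fin d))) [IsProbabilityMeasure ν]
    (hν : ∃ K : Set (EuclideanSpace ℝ (Fin d)), IsCompact K ∧ ν Kᶜ = 0)
    (g r : ℝ) (hr : 0 < r)
    (X Z : Ω → EuclideanSpace ℝ (Fin d)) (hX : Measurable X) (hZ : Measurable Z)
    (hXlaw : P.map X = ν) (hZlaw : P.map Z = stdGaussian d)
    (hindep : ProbabilityTheory.IndepFun X Z P)
    (m : EuclideanSpace ℝ (Fin d) → EuclideanSpace ℝ (Fin d))
    (hm : ∀ y, m y = (∫ x', exp (-‖y - g • x'‖ ^ 2 / (2 * r ^ 2)) ∂ν)⁻¹ •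
      ∫ x', exp (-‖y - g • x'‖ ^ 2 / (2 * r ^ 2)) • x' ∂ν) :
    P[X | MeasurableSpace.comap (fun ω => g • X ω + r • Z ω) inferInstance]
      =ᵐ[P] fun ω => m (g • X ω + r • Z ω) := by
  obtain ⟨K, hK, hνK⟩ := hν
  subst hXlaw
  obtain rfl := funext hm
  exact stmt_13_general P hX hZ hZlaw hindep (measurable_const_smul g) hr.ne'
    measurable_fst.stronglyMeasurable
    (integrable_of_isBounded_of_map_compl_eq_zero hX.aestronglyMeasurable hK.isBounded hνK)
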